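/- Let G be a finite simple connected graph on n ≥ 2 vertices. Then q(G) = 2·∑_{v ∈ V(G)} (1 − 1/c(v)) holds if and only if: either ω(G) = 2 and G is a complete bipartite graph, or ω(G) ≥ 3 and G is a complete ω(G)-partite graph all of whose parts have the same size. -/

import Mathlib

open scoped Classical
open Finset

variable {V : Type*}

noncomputable def adjMx [Fintype V] (G : SimpleGraph V) : Matrix V V ℝ :=
  Matrix.of fun u v => if G.Adj u v then 1 else 0

noncomputable def degMx [Fintype V] [DecidableEq V] (G : SimpleGraph V) : Matrix V V ℝ :=
  Matrix.diagonal fun v => ∑ u, if G.Adj v u then (1 : ℝ) else 0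

noncomputable def signlessLap [Fintype V] [DecidableEq V] (G : SimpleGraph V) : Matrix V V ℝ :=
  degMx G + adjMx G

lemma adjMx_isHermitian [Fintype V] (G : SimpleGraph V) : (adjMx G).IsHermitian := by
  ext u v
  simp [adjMx, Matrix.conjTranspose_apply, SimpleGraph.adj_comm]

lemma signlessLap_isHermitian [Fintype V] [DecidableEq V] (G : SimpleGraph V) :
    (signlessLap G).IsHermitian :=
  (Matrix.isHermitian_diagonal _).add (adjMx_isHermitian G)

noncomputable def maxEig [Fintype V] [DecidableEq V] {A : Matrix V V ℝ}
    (hA : A.IsHermitian) : ℝ := ⨆ v, hA.eigenvalues v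

noncomputable def qIndex [Fintype V] [DecidableEq V] (G : SimpleGraph V) : ℝ :=
  maxEig (signlessLap_isHermitian G)

noncomputable def lambda1 [Fintype V] [DecidableEq V] (G : SimpleGraph V) : ℝ :=
  maxEig (adjMx_isHermitian G)

/-- Maximum size of a clique of `G` containing vertex `v`. -/
noncomputable def cliqueAt (G : SimpleGraph V) (v : V) : ℕ :=
  sSup {n | ∃ s : Finset V, G.IsNClique n s ∧ v ∈ s}

/-- Maximum size of a clique of `G` containing both `u` and `v`. -/
noncomputable def cliqueAtEdge (G : SimpleGraph V) (u v : V) : ℕ :=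
  sSup {n | ∃ s : Finset V, G.IsNClique n s ∧ u ∈ s ∧ v ∈ s}

lemma cs_aux (S : Finset V) (w x : V → ℝ) (hw : ∀ v ∈ S, 0 < w v) (K : ℝ) (hK : 2 ≤ K)
    (hS : (S.card : ℝ) ≤ K) :
    (∑ v ∈ S, w v * x v)^2 ≤ (1 - 2/K) * (∑ v ∈ S, w v) * (∑ v ∈ S, w v * x v^2)
      + 2 * ∑ v ∈ S, (w v)^2 * x v^2 := by
  rcases S.eq_empty_or_nonempty with rfl | hne
  · simp
  set W := ∑ v ∈ S, w v with hW
  have hWpos : 0 < W := Finset.sum_pos hw hne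
  have hKp : 0 < K := by linarith
  have hα : 0 ≤ 1 - 2/K := by
    rw [sub_nonneg, div_le_one hKp]; exact hK
  set α := 1 - 2/K with hαd
  have hden : ∀ v ∈ S, 0 < α * W + 2 * w v := fun v hv => by
    have := hw v hv; positivity
  have h1 := Finset.sum_sq_le_sum_mul_sum_of_sq_le_mul S (r := fun v => w v * x v)
    (f := fun v => w v / (α * W + 2 * w v)) (g := fun v => w v * x v^2 * (α * W + 2 * w v))
    (fun v hv => by have := hw v hv; have := hden v hv; positivity)
    (fun v hv => by have := hw v hv; have := hden v hv; positivity)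
    (fun v hv => by
      have h := (hden v hv).ne'
      refine le_of_eq ?_
      rw [mul_comm (w v * x v^2), ← mul_assoc, div_mul_cancel₀ _ h]; ring)
  have h2 : ∑ v ∈ S, w v / (α * W + 2 * w v) ≤ 1 := by
    calc _ ≤ ∑ v ∈ S, (2/K^2 + α * w v / W) := by
          apply Finset.sum_le_sum
          intro v hv
          rw [div_le_iff₀ (hden v hv)]
          have : (2/K^2 + α * w v / W) * (α * W + 2 * w v) - w v
              = 2 * α * (w v - W/K)^2 / W := by
            rw [hαd]; field_simp; ring
          have h3 : 0 ≤ 2 * α * (w v - W/K)^2 / W := by positivity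
          linarith
      _ = S.card * (2/K^2) + α := by
          rw [Finset.sum_add_distrib, ← Finset.sum_div S (fun v => α * w v), ← Finset.mul_sum, ← hW,
            Finset.sum_const, nsmul_eq_mul, mul_div_assoc, div_self hWpos.ne', mul_one]
      _ ≤ K * (2/K^2) + α := by gcongr
      _ = 1 := by rw [hαd]; field_simp; ring
  have h3 : 0 ≤ ∑ v ∈ S, w v * x v^2 * (α * W + 2 * w v) :=
    Finset.sum_nonneg (fun v hv => by have := hw v hv; have := hden v hv; positivity)
  have h4 : ∑ v ∈ S, w v * x v^2 * (α * W + 2 * w v) = α * W * (∑ v ∈ S, w v * x v^2)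
      + 2 * ∑ v ∈ S, (w v)^2 * x v^2 := by
    clear_value W
    rw [Finset.mul_sum, Finset.mul_sum, ← Finset.sum_add_distrib]
    refine Finset.sum_congr rfl fun v _ => ?_
    ring
  nlinarith [mul_le_mul_of_nonneg_right h2 h3]

section
variable [Fintype V]

noncomputable def av (G : SimpleGraph V) (v : V) : ℝ := 1 - 1 / (cliqueAt G v : ℝ)

lemma le_cliqueAt (G : SimpleGraph V) {v : V} {s : Finset V} (hs : G.IsClique s) (hv : v ∈ s) :
    s.card ≤ cliqueAt G v := by
  apply le_csSup
  · refine ⟨Fintype.card V, ?_⟩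
    rintro n ⟨s, hs, -⟩
    rw [← hs.card_eq]; exact Finset.card_le_univ s
  · exact ⟨s, ⟨hs, rfl⟩, hv⟩

lemma cliqueAt_le (G : SimpleGraph V) (v : V) : cliqueAt G v ≤ G.cliqueNum := by
  have hne : {n | ∃ s : Finset V, G.IsNClique n s ∧ v ∈ s}.Nonempty :=
    ⟨1, {v}, by simp [SimpleGraph.isNClique_iff]⟩
  refine csSup_le hne ?_
  rintro n ⟨s, hs, -⟩
  have h := hs.isClique.card_le_cliqueNum
  rwa [hs.card_eq] at h

noncomputable def MM (G : SimpleGraph V) (x : V → ℝ) : Matrix V V ℝ :=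
  Matrix.of fun u v => (if G.Adj u v then (x u + x v)^2/2 else 0)
    - av G u * x v^2 - av G v * x u^2

noncomputable def DD (G : SimpleGraph V) (x w : V → ℝ) : ℝ := ∑ u, ∑ v, w u * w v * MM G x u v

lemma DD_eq (G : SimpleGraph V) (x w : V → ℝ) : DD G x w =
    (∑ u, ∑ v, if G.Adj u v then w u * w v * ((x u + x v)^2/2) else 0)
      - 2 * (∑ v, w v * av G v) * (∑ v, w v * x v^2) := by
  have h1 : (∑ v, w v * av G v) * (∑ v, w v * x v^2)
      = ∑ u, ∑ v, w u * w v * (av G u * x v^2) := by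
    rw [Finset.sum_mul_sum]
    refine Finset.sum_congr rfl fun u _ => Finset.sum_congr rfl fun v _ => by ring
  have h2 : (∑ v, w v * av G v) * (∑ v, w v * x v^2)
      = ∑ u, ∑ v, w u * w v * (av G v * x u^2) := by
    rw [h1, Finset.sum_comm]
    refine Finset.sum_congr rfl fun u _ => Finset.sum_congr rfl fun v _ => by ring
  have : 2 * (∑ v, w v * av G v) * (∑ v, w v * x v^2) =
     ∑ u, ∑ v, w u * w v * (av G u * x v^2) + ∑ u, ∑ v, w u * w v * (av G v * x u^2) := by
    rw [← h1, ← h2]; ring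
  rw [this, DD]
  simp only [← Finset.sum_add_distrib, ← Finset.sum_sub_distrib]
  refine Finset.sum_congr rfl fun u _ => Finset.sum_congr rfl fun v _ => ?_
  simp only [MM, Matrix.of_apply]
  split_ifs <;> ring

/-- expansion along a line -/
lemma DD_line (G : SimpleGraph V) (x w δ : V → ℝ) : ∃ L : ℝ, ∀ t : ℝ,
    DD G x (fun v => w v + t * δ v) = DD G x w + t * L + t^2 * DD G x δ := by
  refine ⟨∑ u, ∑ v, (w u * δ v + δ u * w v) * MM G x u v, fun t => ?_⟩
  simp only [DD, Finset.mul_sum, ← Finset.sum_add_distrib]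
  refine Finset.sum_congr rfl fun u _ => Finset.sum_congr rfl fun v _ => by ring

lemma DD_clique (G : SimpleGraph V) (hc : ∀ v, 2 ≤ cliqueAt G v) (x w : V → ℝ)
    (hw : ∀ v, 0 ≤ w v) (hcl : G.IsClique {v | w v ≠ 0}) : DD G x w ≤ 0 := by
  set S : Finset V := Finset.univ.filter (fun v => w v ≠ 0) with hS
  have hScl : G.IsClique (S : Set V) := by simpa [hS] using hcl
  have hmem : ∀ v, v ∈ S ↔ w v ≠ 0 := by simp [hS]
  have hpos : ∀ v ∈ S, 0 < w v := fun v hv => lt_of_le_of_ne (hw v) (Ne.symm ((hmem v).1 hv))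
  have hz : ∀ v, v ∉ S → w v = 0 := fun v hv => by simpa [hmem] using hv
  have hsum : ∀ g : V → ℝ, ∑ v, w v * g v = ∑ v ∈ S, w v * g v := fun g => by
    symm; apply Finset.sum_subset (Finset.subset_univ _)
    intro v _ hv; rw [hz v hv]; simp
  rw [DD_eq]
  set K : ℝ := max (S.card : ℝ) 2 with hK
  have hK2 : 2 ≤ K := le_max_right _ _
  have hKp : 0 < K := by linarith
  have hcs := cs_aux S w x hpos K hK2 (le_max_left _ _)
  have hN : (∑ u, ∑ v, if G.Adj u v then w u * w v * ((x u + x v)^2/2) else 0)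
      = (∑ v ∈ S, w v) * (∑ v ∈ S, w v * x v^2) + (∑ v ∈ S, w v * x v)^2
        - 2 * ∑ v ∈ S, (w v)^2 * x v^2 := by
    have e1 : ∀ u v, (if G.Adj u v then w u * w v * ((x u + x v)^2/2) else 0)
       = w u * (w v * ((x u + x v)^2/2 - if u = v then 2 * x u ^2 else 0)) := by
      intro u v
      by_cases huv : u = v
      · subst huv; simp; right; ring
      · by_cases hu : u ∈ S
        · by_cases hv : v ∈ S
          · have := hScl hu hv huv
            simp [this, huv]; ring
          · simp [hz v hv]
        · simp [hz u hu]
    have e2 : ∀ u, ∑ v, (if G.Adj u v then w u * w v * ((x u + x v)^2/2) else 0)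
       = w u * ∑ v ∈ S, (w v * ((x u + x v)^2/2 - if u = v then 2 * x u ^2 else 0)) := by
      intro u
      rw [← hsum, Finset.mul_sum]
      exact Finset.sum_congr rfl fun v _ => e1 u v
    rw [Finset.sum_congr rfl fun u _ => e2 u, hsum]
    have e3 : ∀ u ∈ S, w u * ∑ v ∈ S, (w v * ((x u + x v)^2/2 - if u = v then 2 * x u ^2 else 0))
      = (w u * x u^2) * (∑ v ∈ S, w v)/2 + w u * x u * (∑ v ∈ S, w v * x v)
        + w u * (∑ v ∈ S, w v * x v^2)/2 - 2 * (w u^2 * x u^2) := by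
      intro u hu
      have : ∑ v ∈ S, (w v * ((x u + x v)^2/2 - if u = v then 2 * x u ^2 else 0))
        = ∑ v ∈ S, (x u^2/2 * w v + x u * (w v * x v) + (1/2) * (w v * x v^2)
           - if u = v then 2 * w v * x u ^2 else 0) := by
        refine Finset.sum_congr rfl fun v _ => ?_
        split_ifs <;> ring
      rw [this]
      simp only [Finset.sum_sub_distrib, Finset.sum_add_distrib, ← Finset.mul_sum]
      rw [Finset.sum_ite_eq, if_pos hu]
      ring
    rw [Finset.sum_congr rfl e3]
    simp only [Finset.sum_sub_distrib, Finset.sum_add_distrib, ← Finset.mul_sum, ← Finset.sum_mul,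
      ← Finset.sum_div]
    ring
  have ha : (1 - 1/K) * (∑ v ∈ S, w v) ≤ ∑ v, w v * av G v := by
    rw [hsum, Finset.mul_sum]
    apply Finset.sum_le_sum
    intro v hv
    rw [mul_comm]
    apply mul_le_mul_of_nonneg_left _ (hw v)
    have : K ≤ cliqueAt G v := by
      apply max_le
      · exact_mod_cast le_cliqueAt G hScl hv
      · exact_mod_cast hc v
    unfold av
    gcongr
  have hX : 0 ≤ ∑ v ∈ S, w v * x v^2 :=
    Finset.sum_nonneg fun v hv => mul_nonneg (hw v) (sq_nonneg _)
  rw [hN, hsum (fun v => x v^2)]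
  have := mul_le_mul_of_nonneg_right ha hX
  have e : (1 - 2/K) = 2 * (1 - 1/K) - 1 := by ring
  rw [e] at hcs
  nlinarith

lemma av_ge (G : SimpleGraph V) (hc : ∀ v, 2 ≤ cliqueAt G v) (v : V) : 1/2 ≤ av G v := by
  have : (2:ℝ) ≤ cliqueAt G v := by exact_mod_cast hc v
  have : 1 / (cliqueAt G v : ℝ) ≤ 1/2 := by gcongr
  unfold av; linarith

lemma av_le (G : SimpleGraph V) (v : V) : av G v ≤ 1 := by
  have : 0 ≤ 1 / (cliqueAt G v : ℝ) := by positivity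
  unfold av; linarith

lemma DD_le (G : SimpleGraph V) (hc : ∀ v, 2 ≤ cliqueAt G v) (x : V → ℝ) (m : ℕ) :
    ∀ w : V → ℝ, (∀ v, 0 ≤ w v) → (Finset.univ.filter (fun v => w v ≠ 0)).card ≤ m →
      DD G x w ≤ 0 := by
  induction m with
  | zero =>
    intro w hw h
    have : ∀ v, w v = 0 := by simpa [Finset.filter_eq_empty_iff] using h
    simp [DD, this]
  | succ m ih =>
    intro w hw h
    by_cases hcl : G.IsClique {v | w v ≠ 0}
    · exact DD_clique G hc x w hw hcl
    have key : ∀ u v, w u ≠ 0 → w v ≠ 0 → u ≠ v → ¬ G.Adj u v → ∀ L : ℝ,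
        (∀ t : ℝ, DD G x (fun z => w z + t * ((Pi.single u (av G u)⁻¹ : V → ℝ) z
          - (Pi.single v (av G v)⁻¹ : V → ℝ) z)) = DD G x w + t * L) → 0 ≤ L →
        DD G x w ≤ 0 := by
      intro u v hu hv huv hadj L hL hL0
      have hau := av_ge G hc u
      have hav := av_ge G hc v
      have ht : 0 ≤ w v * av G v := mul_nonneg (hw v) (by linarith)
      have h1 := hL (w v * av G v)
      have h2 : DD G x (fun z => w z + (w v * av G v) * ((Pi.single u (av G u)⁻¹ : V → ℝ) z
          - (Pi.single v (av G v)⁻¹ : V → ℝ) z)) ≤ 0 := by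
        apply ih
        · intro z
          by_cases hzv : z = v
          · subst hzv
            simp only [Pi.single_eq_same, Pi.single_eq_of_ne huv.symm]
            field_simp; simp
          · simp only [Pi.single_eq_of_ne hzv]
            by_cases hzu : z = u
            · subst hzu; simp only [Pi.single_eq_same]
              have := hw z
              have : 0 ≤ (av G z)⁻¹ := by positivity
              simp only [sub_zero]; positivity
            · simp only [Pi.single_eq_of_ne hzu]; simp [hw]
        · refine Nat.lt_succ_iff.1 (lt_of_lt_of_le (Finset.card_lt_card ?_) h)
          rw [Finset.ssubset_iff_of_subset]
          · refine ⟨v, by simpa using hv, ?_⟩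
            simp only [Finset.mem_filter, Finset.mem_univ, true_and, not_not,
              Pi.single_eq_same, Pi.single_eq_of_ne huv.symm]
            field_simp; simp
          · intro z
            simp only [Finset.mem_filter, Finset.mem_univ, true_and]
            intro hz hz0
            apply hz
            have hzu : z ≠ u := by rintro rfl; exact hu hz0
            have hzv : z ≠ v := by rintro rfl; exact hv hz0
            simp [hz0, Pi.single_eq_of_ne hzu, Pi.single_eq_of_ne hzv]
      rw [h1] at h2
      nlinarith [mul_nonneg ht hL0]
    simp only [SimpleGraph.IsClique, Set.Pairwise] at hcl
    push Not at hcl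
    obtain ⟨u, hu, v, hv, huv, hadj⟩ := hcl
    have hau := av_ge G hc u
    have hav := av_ge G hc v
    have hadj' : ¬ G.Adj v u := fun h => hadj h.symm
    obtain ⟨L, hL⟩ := DD_line G x w (fun z => (Pi.single u (av G u)⁻¹ : V → ℝ) z
          - (Pi.single v (av G v)⁻¹ : V → ℝ) z)
    have hδ : DD G x (fun z => (Pi.single u (av G u)⁻¹ : V → ℝ) z
          - (Pi.single v (av G v)⁻¹ : V → ℝ) z) = 0 := by
      simp only [DD, sub_mul, mul_sub, Finset.sum_sub_distrib, Pi.single_apply, ite_mul, mul_ite,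
        zero_mul, mul_zero, Finset.sum_ite_eq', Finset.mem_univ, if_true]
      simp [MM, hadj, hadj', huv, huv.symm]
      field_simp
      ring
    simp only [hδ, mul_zero, add_zero] at hL
    rcases le_total 0 L with h0 | h0
    · exact key u v hu hv huv hadj L hL h0
    · refine key v u hv hu huv.symm hadj' (-L) ?_ (by linarith)
      intro t
      rw [show DD G x w + t * (-L) = DD G x w + (-t) * L by ring, ← hL]
      congr 1; ext z; ring

lemma DD_nonpos (G : SimpleGraph V) (hc : ∀ v, 2 ≤ cliqueAt G v) (x : V → ℝ)
    (w : V → ℝ) (hw : ∀ v, 0 ≤ w v) : DD G x w ≤ 0 :=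
  DD_le G hc x _ w hw le_rfl

lemma multipartite_of_eq (G : SimpleGraph V) (hc : ∀ v, 2 ≤ cliqueAt G v) (x : V → ℝ)
    (hx : ∀ v, 0 < x v) (h0 : DD G x (fun _ => 1) = 0) (u v z : V) (huv : ¬ G.Adj u v)
    (hvz : ¬ G.Adj v z) : ¬ G.Adj u z := by
  intro huz
  have huz' := huz.ne
  have huv' : u ≠ v := by rintro rfl; exact hvz huz
  have hvz' : v ≠ z := by rintro rfl; exact huv huz
  have hau := av_ge G hc u
  have hav := av_ge G hc v
  have haz := av_ge G hc z
  have hau1 := av_le G u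
  have haz1 := av_le G z
  set β : ℝ := (av G u + av G z) / av G v with hβ
  have hβ0 : 0 ≤ β := by positivity
  have hβ4 : β ≤ 4 := by
    rw [hβ, div_le_iff₀ (by linarith)]; linarith
  set δ : V → ℝ := fun y => (Pi.single u 1 : V → ℝ) y + (Pi.single z 1 : V → ℝ) y
    - (Pi.single v β : V → ℝ) y with hδ
  have hδ4 : ∀ y, -4 ≤ δ y ∧ δ y ≤ 4 := by
    intro y
    simp only [hδ, Pi.single_apply]
    constructor <;> split_ifs <;> linarith
  obtain ⟨L, hL⟩ := DD_line G x (fun _ => 1) δ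
  have h1 := DD_nonpos G hc x (fun y => 1 + (1/4) * δ y) (fun y => by linarith [(hδ4 y).1])
  have h2 := DD_nonpos G hc x (fun y => 1 + (-(1/4)) * δ y) (fun y => by linarith [(hδ4 y).2])
  rw [hL, h0] at h1 h2
  have h3 : DD G x δ = (x u + x z)^2 := by
    have e1 : ∀ g : V → ℝ, ∑ y, δ y * g y = g u + g z - β * g v := by
      intro g
      simp [hδ, sub_mul, add_mul, Finset.sum_sub_distrib, Finset.sum_add_distrib, Pi.single_apply]
    have e2 : DD G x δ = ∑ y, δ y * ∑ y', δ y' * MM G x y y' := by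
      simp only [DD, Finset.mul_sum]
      refine Finset.sum_congr rfl fun u _ => Finset.sum_congr rfl fun v _ => by ring
    rw [e2, e1, e1, e1, e1]
    have hvu : ¬ G.Adj v u := fun h => huv h.symm
    have hzv : ¬ G.Adj z v := fun h => hvz h.symm
    simp [MM, huv, hvu, hvz, hzv, huz, huz.symm]
    have : β * av G v = av G u + av G z := by rw [hβ]; field_simp
    generalize av G v = q at *
    have e : av G u = β * q - av G z := by linarith
    rw [e]
    ring
  have := hx u
  have := hx z
  have : 0 < (x u + x z)^2 := by positivity
  nlinarith

end
section
variable [Fintype V]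

lemma sl_mulVec [DecidableEq V] (G : SimpleGraph V) (x : V → ℝ) (u : V) :
    (signlessLap G).mulVec x u = ∑ v, if G.Adj u v then x u + x v else 0 := by
  rw [signlessLap, Matrix.add_mulVec, Pi.add_apply, degMx, Matrix.mulVec_diagonal,
    Finset.sum_mul]
  simp only [Matrix.mulVec, dotProduct, adjMx, Matrix.of_apply, ← Finset.sum_add_distrib]
  refine Finset.sum_congr rfl fun v _ => ?_
  split_ifs <;> ring

lemma sl_quad [DecidableEq V] (G : SimpleGraph V) (x : V → ℝ) :
    x ⬝ᵥ (signlessLap G).mulVec x = ∑ u, ∑ v, if G.Adj u v then (x u + x v)^2/2 else 0 := by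
  have h1 : x ⬝ᵥ (signlessLap G).mulVec x
      = ∑ u, ∑ v, if G.Adj u v then x u * (x u + x v) else 0 := by
    simp only [dotProduct, sl_mulVec, Finset.mul_sum, mul_ite, mul_zero]
  have h2 : x ⬝ᵥ (signlessLap G).mulVec x
      = ∑ u, ∑ v, if G.Adj u v then x v * (x u + x v) else 0 := by
    rw [h1, Finset.sum_comm]
    refine Finset.sum_congr rfl fun u _ => Finset.sum_congr rfl fun v _ => ?_
    simp only [G.adj_comm u v, add_comm (x u) (x v)]
  have h3 : x ⬝ᵥ (signlessLap G).mulVec x = (x ⬝ᵥ (signlessLap G).mulVec x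
     + x ⬝ᵥ (signlessLap G).mulVec x)/2 := by ring
  rw [h3]
  nth_rw 1 [h1]
  rw [h2]
  simp only [← Finset.sum_add_distrib, Finset.sum_div]
  refine Finset.sum_congr rfl fun u _ => Finset.sum_congr rfl fun v _ => ?_
  split_ifs <;> ring

lemma DD_one [DecidableEq V] (G : SimpleGraph V) (x : V → ℝ) : DD G x (fun _ => 1) =
    x ⬝ᵥ (signlessLap G).mulVec x - 2 * (∑ v, av G v) * (x ⬝ᵥ x) := by
  rw [DD_eq, sl_quad]
  simp [dotProduct, sq]

lemma exists_top [DecidableEq V] [Nonempty V] (G : SimpleGraph V) :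
    ∃ x : V → ℝ, x ≠ 0 ∧ (signlessLap G).mulVec x = qIndex G • x := by
  obtain ⟨i, hi⟩ := exists_eq_ciSup_of_finite (f := (signlessLap_isHermitian G).eigenvalues)
  refine ⟨(signlessLap_isHermitian G).eigenvectorBasis i, ?_, ?_⟩
  · intro h
    have h1 := (signlessLap_isHermitian G).eigenvectorBasis.orthonormal.1 i
    have h2 : (signlessLap_isHermitian G).eigenvectorBasis i = 0 := by
      ext v; exact congrFun h v
    rw [h2] at h1; simp at h1
  · rw [Matrix.IsHermitian.mulVec_eigenvectorBasis, hi]; rfl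

lemma le_qIndex [DecidableEq V] (G : SimpleGraph V) (μ : ℝ) (x : V → ℝ) (hx : x ≠ 0)
    (h : (signlessLap G).mulVec x = μ • x) : μ ≤ qIndex G := by
  have h1 : μ ∈ spectrum ℝ (signlessLap G) := by
    rw [← Matrix.spectrum_toLin']
    apply Module.End.HasEigenvalue.mem_spectrum
    refine Module.End.hasEigenvalue_of_hasEigenvector (x := x) ⟨?_, hx⟩
    rw [Module.End.mem_eigenspace_iff]
    simpa using h
  rw [(signlessLap_isHermitian G).spectrum_real_eq_range_eigenvalues] at h1
  obtain ⟨i, rfl⟩ := h1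
  exact le_ciSup (Set.finite_range _).bddAbove i

lemma two_le_cliqueAt (G : SimpleGraph V) (hcard : 2 ≤ Fintype.card V) (hconn : G.Connected)
    (v : V) : 2 ≤ cliqueAt G v := by
  have : Nontrivial V := Fintype.one_lt_card_iff_nontrivial.1 hcard
  obtain ⟨u, hu⟩ := hconn.preconnected.exists_adj_of_nontrivial v
  have h := le_cliqueAt G (s := {v, u}) (v := v) (by simp [SimpleGraph.isClique_insert, hu]) (by simp)
  rwa [Finset.card_pair hu.ne] at h

lemma dot_pos (x : V → ℝ) (hx : x ≠ 0) : 0 < x ⬝ᵥ x := by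
  have h : 0 ≤ x ⬝ᵥ x := Finset.sum_nonneg fun v _ => mul_self_nonneg _
  refine lt_of_le_of_ne h fun h0 => hx ?_
  exact dotProduct_self_eq_zero.1 h0.symm

lemma qIndex_le [DecidableEq V] (G : SimpleGraph V) (hcard : 2 ≤ Fintype.card V)
    (hconn : G.Connected) : qIndex G ≤ 2 * ∑ v, av G v := by
  have := hconn.nonempty
  obtain ⟨x, hx, h⟩ := exists_top G
  have h1 := DD_nonpos G (two_le_cliqueAt G hcard hconn) x (fun _ => 1) (fun _ => zero_le_one)
  rw [DD_one, h, dotProduct_smul, smul_eq_mul] at h1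
  have h2 := dot_pos x hx
  by_contra hlt
  push Not at hlt
  nlinarith [mul_lt_mul_of_pos_right hlt h2]

lemma perron [DecidableEq V] (G : SimpleGraph V) (hcard : 2 ≤ Fintype.card V)
    (hconn : G.Connected) (hq : qIndex G = 2 * ∑ v, av G v) :
    ∃ x : V → ℝ, (∀ v, 0 < x v) ∧ DD G x (fun _ => 1) = 0 ∧
      (signlessLap G).mulVec x = qIndex G • x := by
  have := hconn.nonempty
  obtain ⟨x, hx, h⟩ := exists_top G
  have hD := fun y => DD_nonpos G (two_le_cliqueAt G hcard hconn) y (fun _ => 1)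
    (fun _ => zero_le_one)
  simp only [DD_one, ← hq] at hD
  set y : V → ℝ := fun v => |x v| with hy
  have hyy : y ⬝ᵥ y = x ⬝ᵥ x := by simp [dotProduct, hy]
  have hle : x ⬝ᵥ (signlessLap G).mulVec x ≤ y ⬝ᵥ (signlessLap G).mulVec y := by
    rw [sl_quad, sl_quad]
    refine Finset.sum_le_sum fun u _ => Finset.sum_le_sum fun v _ => ?_
    split_ifs
    · have : (x u + x v)^2 ≤ (y u + y v)^2 := by
        rw [sq_le_sq, abs_of_nonneg (add_nonneg (abs_nonneg (x u)) (abs_nonneg (x v)))]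
        exact abs_add_le _ _
      linarith
    · exact le_rfl
  have h0 : y ⬝ᵥ (signlessLap G).mulVec y - qIndex G * (y ⬝ᵥ y) = 0 := by
    apply le_antisymm (hD y)
    rw [hyy]
    rw [h, dotProduct_smul, smul_eq_mul] at hle
    linarith
  have hform : ∀ z : V → ℝ, z ⬝ᵥ (qIndex G • (1 : Matrix V V ℝ) - signlessLap G).mulVec z
      = qIndex G * (z ⬝ᵥ z) - z ⬝ᵥ (signlessLap G).mulVec z := by
    intro z
    rw [Matrix.sub_mulVec, Matrix.smul_mulVec, Matrix.one_mulVec, dotProduct_sub, dotProduct_smul,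
      smul_eq_mul]
  have hpsd : (qIndex G • (1 : Matrix V V ℝ) - signlessLap G).PosSemidef := by
    refine Matrix.PosSemidef.of_dotProduct_mulVec_nonneg ?_ ?_
    · refine Matrix.IsHermitian.sub ?_ (signlessLap_isHermitian G)
      simp [Matrix.IsHermitian]
    · intro z
      rw [star_trivial, hform]
      linarith [hD z]
  have hyeig : (signlessLap G).mulVec y = qIndex G • y := by
    have := (hpsd.dotProduct_mulVec_zero_iff y).1 (by
      rw [star_trivial, hform]; linarith)
    rw [Matrix.sub_mulVec, Matrix.smul_mulVec, Matrix.one_mulVec, sub_eq_zero] at this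
    exact this.symm
  refine ⟨y, ?_, by rw [DD_one, ← hq]; exact h0, hyeig⟩
  have hy0 : ∀ v, 0 ≤ y v := fun v => abs_nonneg _
  have hstep : ∀ u v, G.Adj u v → y u = 0 → y v = 0 := by
    intro u v huv hu
    have h1 := congrFun hyeig u
    rw [sl_mulVec, Pi.smul_apply, hu, smul_zero, Finset.sum_eq_zero_iff_of_nonneg] at h1
    · simpa [huv] using h1 v (Finset.mem_univ _)
    · intro z _; split_ifs
      · simpa using hy0 z
      · exact le_rfl
  by_contra hcon
  push Not at hcon
  obtain ⟨u, hu⟩ := hcon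
  have hu0 : y u = 0 := le_antisymm hu (hy0 u)
  apply hx
  ext v
  obtain ⟨p⟩ := hconn.preconnected u v
  have : ∀ a b (p : G.Walk a b), y a = 0 → y b = 0 := by
    intro a b p
    induction p with
    | nil => exact id
    | cons hab _ ih => exact fun ha => ih (hstep _ _ hab ha)
  simpa [hy] using this u v p hu0

lemma mp_clique {k : ℕ} (G : SimpleGraph V) (f : V → Fin k) (hf : Function.Surjective f)
    (hadj : ∀ u v, G.Adj u v ↔ f u ≠ f v) (v : V) : k ≤ cliqueAt G v := by
  set g := Function.surjInv hf
  have hg : ∀ i, f (g i) = i := Function.surjInv_eq hf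
  set g' : Fin k → V := fun i => if i = f v then v else g i with hg'
  have hfg' : ∀ i, f (g' i) = i := by
    intro i; simp only [hg']; split_ifs with h
    · exact h.symm
    · exact hg i
  have hinj : Function.Injective g' := Function.LeftInverse.injective hfg'
  have := le_cliqueAt G (s := Finset.univ.image g') (v := v) (by
    intro a ha b hb hab
    simp only [Finset.coe_image, Finset.coe_univ, Set.image_univ, Set.mem_range] at ha hb
    obtain ⟨i, rfl⟩ := ha
    obtain ⟨j, rfl⟩ := hb
    rw [hadj, hfg', hfg']
    rintro rfl; exact hab rfl) (by
    rw [Finset.mem_image]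
    exact ⟨f v, Finset.mem_univ _, by simp [hg']⟩)
  rwa [Finset.card_image_of_injective _ hinj, Finset.card_univ, Fintype.card_fin] at this

lemma mp_cliqueNum_le {k : ℕ} (G : SimpleGraph V) (f : V → Fin k)
    (hadj : ∀ u v, G.Adj u v ↔ f u ≠ f v) : G.cliqueNum ≤ k := by
  obtain ⟨s, hs⟩ := G.exists_isNClique_cliqueNum
  rw [← hs.card_eq]
  have := Finset.card_le_card_of_injOn (s := s) (t := Finset.univ) f (fun _ _ => Finset.mem_univ _)
    (by
      intro a ha b hb hab
      by_contra hne
      exact (hadj a b).1 (hs.isClique ha hb hne) hab)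
  simpa using this

lemma av_mp {k : ℕ} (G : SimpleGraph V) (f : V → Fin k) (hf : Function.Surjective f)
    (hadj : ∀ u v, G.Adj u v ↔ f u ≠ f v) (v : V) : av G v = 1 - 1/(k:ℝ) := by
  have : cliqueAt G v = k := le_antisymm ((cliqueAt_le G v).trans (mp_cliqueNum_le G f hadj))
    (mp_clique G f hf hadj v)
  rw [av, this]

lemma mp_mulVec [DecidableEq V] {k : ℕ} (G : SimpleGraph V) (f : V → Fin k)
    (hadj : ∀ u v, G.Adj u v ↔ f u ≠ f v) (x : V → ℝ) (v : V) :
    (signlessLap G).mulVec x v = ((Fintype.card V : ℝ)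
      - (Finset.univ.filter fun u => f u = f v).card) * x v
      + (∑ u, x u - ∑ u ∈ Finset.univ.filter (fun u => f u = f v), x u) := by
  rw [sl_mulVec]
  have : ∀ u, (if G.Adj v u then x v + x u else 0)
      = (x v + x u) - (if f u = f v then x v + x u else 0) := by
    intro u
    simp only [hadj]
    by_cases h : f u = f v
    · simp [h]
    · simp [h, Ne.symm h]
  rw [Finset.sum_congr rfl fun u _ => this u, Finset.sum_sub_distrib, ← Finset.sum_filter,
    Finset.sum_add_distrib, Finset.sum_add_distrib]
  simp only [Finset.sum_const, nsmul_eq_mul, Finset.card_univ]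
  ring

lemma equal_parts [DecidableEq V] {k : ℕ} (hk : 3 ≤ k) (G : SimpleGraph V) (f : V → Fin k)
    (hf : Function.Surjective f) (hadj : ∀ u v, G.Adj u v ↔ f u ≠ f v) (x : V → ℝ)
    (hx : ∀ v, 0 < x v)
    (h : (signlessLap G).mulVec x = (2 * (Fintype.card V : ℝ) * (1 - 1/(k:ℝ))) • x) (i : Fin k) :
    ((Finset.univ.filter fun v => f v = i).card : ℝ) = Fintype.card V / k := by
  set n : ℝ := (Fintype.card V : ℝ) with hn
  have hk3 : (3:ℝ) ≤ k := by exact_mod_cast hk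
  set c : Fin k → ℝ := fun i => ((Finset.univ.filter fun v => f v = i).card : ℝ) with hc
  have hcpos : ∀ i, 0 < c i := by
    intro i
    obtain ⟨v, hv⟩ := hf i
    have : 0 < (Finset.univ.filter fun v => f v = i).card :=
      Finset.card_pos.2 ⟨v, by simpa using hv⟩
    exact Nat.cast_pos.2 this
  have hnpos : 0 < n := by
    obtain ⟨v, _⟩ := hf i
    have : 0 < Fintype.card V := Fintype.card_pos_iff.2 ⟨v⟩
    exact Nat.cast_pos.2 this
  have hsumc : ∑ i, c i = n := by
    rw [hn, ← Finset.card_univ, Finset.card_eq_sum_card_fiberwise (f := f) (t := Finset.univ)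
      (fun _ _ => Finset.mem_coe.2 (Finset.mem_univ _))]
    simp [hc]
  set α : ℝ := 1 - 2/(k:ℝ) with hα
  have hαpos : 0 < α := by
    rw [hα, sub_pos, div_lt_one (by linarith)]; linarith
  set P : Fin k → ℝ := fun i => ∑ u ∈ Finset.univ.filter (fun u => f u = i), x u with hP
  set X : ℝ := ∑ u, x u with hX
  have hsumP : ∑ i, P i = X := Finset.sum_fiberwise _ _ _
  have hXpos : 0 < X := by
    obtain ⟨v, _⟩ := hf i
    exact Finset.sum_pos (fun v _ => hx v) ⟨v, Finset.mem_univ _⟩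
  have hPi : ∀ i, P i * (α * n + 2 * c i) = c i * X := by
    intro i
    have e : ∀ v ∈ Finset.univ.filter (fun u => f u = i), (α * n + c i) * x v = X - P i := by
      intro v hv
      have hv : f v = i := by simpa using hv
      have h1 := congrFun h v
      rw [mp_mulVec G f hadj, hv, Pi.smul_apply, smul_eq_mul] at h1
      change (n - c i) * x v + (X - P i) = _ at h1
      have : 2 * n * (1 - 1/(k:ℝ)) = α * n + n := by rw [hα]; ring
      rw [this] at h1
      linarith
    have h2 := Finset.sum_congr rfl e
    rw [← Finset.mul_sum, Finset.sum_const, nsmul_eq_mul] at h2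
    change (α * n + c i) * P i = c i * (X - P i) at h2
    linarith
  have hPi' : ∀ i, c i / (α * n + 2 * c i) = P i / X := by
    intro i
    have := hcpos i
    rw [div_eq_div_iff (by positivity) hXpos.ne']
    linarith [hPi i]
  have hsum1 : ∑ i, c i / (α * n + 2 * c i) = 1 := by
    rw [Finset.sum_congr rfl fun i _ => hPi' i, ← Finset.sum_div, hsumP, div_self hXpos.ne']
  have hkey : ∀ i, (2/(k:ℝ)^2 + α * c i / n) * (α * n + 2 * c i) - c i
              = 2 * α * (c i - n/k)^2 / n := by
    intro i
    rw [hα]; field_simp; ring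
  have hle : ∀ i ∈ (Finset.univ : Finset (Fin k)),
      c i / (α * n + 2 * c i) ≤ 2/(k:ℝ)^2 + α * c i / n := by
    intro i _
    have := hcpos i
    rw [div_le_iff₀ (by positivity)]
    have h3 : 0 ≤ 2 * α * (c i - n/k)^2 / n := by positivity
    linarith [hkey i]
  have hsum2 : ∑ i, (2/(k:ℝ)^2 + α * c i / n) = 1 := by
    rw [Finset.sum_add_distrib, ← Finset.sum_div Finset.univ (fun i => α * c i), ← Finset.mul_sum,
      hsumc, Finset.sum_const, nsmul_eq_mul, mul_div_assoc, div_self hnpos.ne', mul_one,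
      Finset.card_univ, Fintype.card_fin, hα]
    field_simp; ring
  have heq := (Finset.sum_eq_sum_iff_of_le hle).1 (hsum1.trans hsum2.symm) i (Finset.mem_univ _)
  have hci := hcpos i
  rw [div_eq_iff (by positivity)] at heq
  have h4 := hkey i
  rw [← heq, sub_self] at h4
  have h5 : (c i - n/k)^2 = 0 := by
    by_contra hne
    have : 0 < (c i - n/k)^2 := lt_of_le_of_ne (sq_nonneg _) (Ne.symm hne)
    have : 0 < 2 * α * (c i - n/k)^2 / n := by positivity
    linarith
  have h6 := pow_eq_zero_iff (two_ne_zero) |>.1 h5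
  change c i = n / k
  linarith

lemma exists_mp (G : SimpleGraph V) (ht : ∀ u v z, ¬ G.Adj u v → ¬ G.Adj v z → ¬ G.Adj u z) :
    ∃ k : ℕ, ∃ f : V → Fin k, Function.Surjective f ∧ ∀ u v, G.Adj u v ↔ f u ≠ f v := by
  let s : Setoid V := ⟨fun u v => ¬ G.Adj u v, fun u => G.irrefl, fun h h' => h h'.symm,
    fun h h' => ht _ _ _ h h'⟩
  let e := Fintype.equivFin (Quotient s)
  refine ⟨_, fun v => e (Quotient.mk s v), e.surjective.comp Quotient.mk_surjective, ?_⟩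
  intro u v
  rw [Ne, e.apply_eq_iff_eq, Quotient.eq]
  exact not_not.symm

lemma mp_reverse [DecidableEq V] {k : ℕ} (hk : 2 ≤ k) (G : SimpleGraph V)
    (hcard : 2 ≤ Fintype.card V) (hconn : G.Connected) (f : V → Fin k)
    (hf : Function.Surjective f) (hadj : ∀ u v, G.Adj u v ↔ f u ≠ f v) (x : V → ℝ)
    (hx : x ≠ 0)
    (h : (signlessLap G).mulVec x = (2 * (Fintype.card V : ℝ) * (1 - 1/(k:ℝ))) • x) :
    qIndex G = 2 * ∑ v, av G v := by
  apply le_antisymm (qIndex_le G hcard hconn)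
  have := le_qIndex G _ x hx h
  rw [Finset.sum_congr rfl fun v _ => av_mp G f hf hadj v, Finset.sum_const, nsmul_eq_mul,
    Finset.card_univ]
  linarith

lemma card_parts {k : ℕ} (f : V → Fin k) :
    ∑ i, ((Finset.univ.filter fun v => f v = i).card : ℝ) = Fintype.card V := by
  rw [← Finset.card_univ, Finset.card_eq_sum_card_fiberwise (f := f) (t := Finset.univ)
      (fun _ _ => Finset.mem_coe.2 (Finset.mem_univ _))]
  simp

end
/-- Equality in the vertex-localized `Q`-index bound holds iff `G` is complete bipartite
(when `ω = 2`) or a regular complete `ω`-partite graph (when `ω ≥ 3`). -/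
theorem stmt3 {V : Type*} [Fintype V] [DecidableEq V]
    (G : SimpleGraph V) (hcard : 2 ≤ Fintype.card V) (hconn : G.Connected) :
    qIndex G = 2 * ∑ v, (1 - 1 / (cliqueAt G v : ℝ)) ↔
      ((G.cliqueNum = 2 ∧ ∃ f : V → Fin 2, Function.Surjective f ∧
          ∀ u v, G.Adj u v ↔ f u ≠ f v) ∨
       (3 ≤ G.cliqueNum ∧ ∃ f : V → Fin G.cliqueNum, Function.Surjective f ∧
          (∀ u v, G.Adj u v ↔ f u ≠ f v) ∧
          ∀ i j : Fin G.cliqueNum,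
            (Finset.univ.filter fun v => f v = i).card
              = (Finset.univ.filter fun v => f v = j).card)) := by
  have hne : Nonempty V := hconn.nonempty
  have hnpos : (0:ℝ) < Fintype.card V := by
    have : 0 < Fintype.card V := by omega
    exact_mod_cast this
  change qIndex G = 2 * ∑ v, av G v ↔ _
  constructor
  · intro hq
    obtain ⟨x, hx, hD, heig⟩ := perron G hcard hconn hq
    have hc2 := two_le_cliqueAt G hcard hconn
    obtain ⟨k, f, hf, hadj⟩ := exists_mp G (multipartite_of_eq G hc2 x hx hD)
    obtain ⟨v0⟩ := hne
    have hk : G.cliqueNum = k := le_antisymm (mp_cliqueNum_le G f hadj)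
      ((mp_clique G f hf hadj v0).trans (cliqueAt_le G v0))
    have hk2 : 2 ≤ k := hk ▸ (hc2 v0).trans (cliqueAt_le G v0)
    subst hk
    rcases hk2.eq_or_lt with h2 | h3
    · left
      refine ⟨h2.symm, ?_⟩
      refine ⟨fun v => Fin.cast h2.symm (f v), ?_, ?_⟩
      · intro i
        obtain ⟨v, hv⟩ := hf (Fin.cast h2 i)
        exact ⟨v, by simp [hv]⟩
      · intro u v
        rw [hadj, Ne, Ne, Fin.cast_inj]
    · right
      refine ⟨h3, f, hf, hadj, ?_⟩
      rw [hq, Finset.sum_congr rfl fun v _ => av_mp G f hf hadj v, Finset.sum_const, nsmul_eq_mul,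
        Finset.card_univ, ← mul_assoc] at heig
      intro i j
      have h1 := equal_parts h3 G f hf hadj x hx heig i
      have h2 := equal_parts h3 G f hf hadj x hx heig j
      have h3 := h1.trans h2.symm
      exact_mod_cast h3
  · rintro (⟨_, f, hf, hadj⟩ | ⟨h3, f, hf, hadj, heq⟩)
    · have hs := card_parts f
      rw [Fin.sum_univ_two] at hs
      set a : ℝ := ((Finset.univ.filter fun v => f v = 0).card : ℝ) with ha
      set b : ℝ := ((Finset.univ.filter fun v => f v = 1).card : ℝ) with hb
      have hapos : 0 < a := by
        obtain ⟨v, hv⟩ := hf 0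
        have : 0 < (Finset.univ.filter fun v => f v = 0).card :=
          Finset.card_pos.2 ⟨v, by simpa using hv⟩
        rw [ha]
        exact_mod_cast this
      have hbpos : 0 < b := by
        obtain ⟨v, hv⟩ := hf 1
        have : 0 < (Finset.univ.filter fun v => f v = 1).card :=
          Finset.card_pos.2 ⟨v, by simpa using hv⟩
        rw [hb]
        exact_mod_cast this
      set g : Fin 2 → ℝ := ![b, a] with hg
      have hX : ∀ i, ∑ u ∈ Finset.univ.filter (fun u => f u = i), g (f u)
          = ((Finset.univ.filter fun v => f v = i).card : ℝ) * g i := by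
        intro i
        rw [Finset.sum_congr rfl (g := fun _ => g i), Finset.sum_const, nsmul_eq_mul]
        intro u hu
        rw [(Finset.mem_filter.1 hu).2]
      have hT : ∑ u, g (f u) = a * b + b * a := by
        rw [← Finset.sum_fiberwise _ f, Fin.sum_univ_two, hX, hX, ← ha, ← hb]
        simp [hg]
      refine mp_reverse le_rfl G hcard hconn f hf hadj (fun v => g (f v)) ?_ ?_
      · obtain ⟨v, hv⟩ := hf 0
        intro h0
        have := congrFun h0 v
        simp [hv, hg] at this
        exact hbpos.ne' this
      · ext v
        rw [mp_mulVec G f hadj, hX, hT, Pi.smul_apply, smul_eq_mul, ← hs]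
        have hv : f v = 0 ∨ f v = 1 := by
          generalize f v = i
          fin_cases i <;> simp
        rcases hv with hv | hv
        · rw [hv, ← ha, show g 0 = b from rfl]; push_cast; ring
        · rw [hv, ← hb, show g 1 = a from rfl]; push_cast; ring
    · refine mp_reverse (by omega) G hcard hconn f hf hadj (fun _ => 1) ?_ ?_
      · obtain ⟨v⟩ := hne
        intro h0
        have := congrFun h0 v
        simp at this
      · ext v
        rw [mp_mulVec G f hadj, Pi.smul_apply, smul_eq_mul]
        have hs := card_parts f
        have hkpos : (0:ℝ) < G.cliqueNum := by
          have : 0 < G.cliqueNum := by omega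
          exact_mod_cast this
        rw [Finset.sum_congr rfl (g := fun _ =>
          ((Finset.univ.filter fun u => f u = f v).card : ℝ)) (fun i _ => by rw [heq i (f v)]),
          Finset.sum_const, nsmul_eq_mul, Finset.card_univ, Fintype.card_fin] at hs
        simp only [Finset.sum_const, nsmul_eq_mul, Finset.card_univ, mul_one]
        rw [← hs]
        field_simp
        ring
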